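/- For all subsets A, B ⊆ Z_2^n and I ⊆ [n], the compression of the sumset contains the sumset of the compressions: C_I(A) + C_I(B) ⊆ C_I(A+B). In particular |C_I(A) + C_I(B)| ≤ |A+B|. -/

import Mathlib

open Finset Pointwise

/-- Encoding of the lexicographic order on `(ZMod 2)^n`. -/
def lexNat {n : ℕ} (x : Fin n → ZMod 2) : ℕ := ∑ i, (x i).val * 2 ^ (i : ℕ)

/-- The `k` lexicographically smallest elements of `T`. -/
def initSeg {n : ℕ} (T : Finset (Fin n → ZMod 2)) (k : ℕ) : Finset (Fin n → ZMod 2) :=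
  T.filter fun x => (T.filter fun y => lexNat y < lexNat x).card < k

/-- The coset of the subgroup `H_I = ⟨e_i : i ∈ I⟩` containing `x`:
all `y` agreeing with `x` outside `I`. -/
def cosetOf {n : ℕ} (I : Finset (Fin n)) (x : Fin n → ZMod 2) : Finset (Fin n → ZMod 2) :=
  Finset.univ.filter fun y => ∀ i ∉ I, y i = x i

/-- The `I`-compression of `A`: in each coset `T` of `H_I`, replace `A ∩ T` by the
lexicographic initial segment of `T` of the same cardinality. -/
def compressI {n : ℕ} (I : Finset (Fin n)) (A : Finset (Fin n → ZMod 2)) :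
    Finset (Fin n → ZMod 2) :=
  Finset.univ.filter fun x => x ∈ initSeg (cosetOf I x) ((A ∩ cosetOf I x).card)

/-!
In the coset `x + H_I`, listed lexicographically, the rank of `x` is the number whose binary digits
are the coordinates of `x` indexed by `I`, so adding vectors amounts to taking the bitwise xor of
ranks. The inclusion therefore reduces to the Hopf–Stiefel type bound that `i < |A|` and `j < |B|`
imply `i xor j < |A + B|` in a vector space over `𝔽₂`.

For the bound, embed the vector space into an integral domain of characteristic two. Splitting off
the common binary digits of `i` and `j` gives `t ≤ i` and `u ≤ j` with `t + u = i xor j` and no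
carries, so that `(t + u).choose t` is odd. If `|A + B| ≤ t + u`, then a monic `g` of degree `t + u`
vanishes on `A + B`. The coefficient of `X ^ t * Y ^ u` in `g (X + Y)` is this binomial coefficient,
so the combinatorial Nullstellensatz contradicts the vanishing of `g (X + Y)` on `A × B`.
-/

section BinomialParity

theorem odd_choose_iff (n k : ℕ) :
    Odd (n.choose k) ↔ Odd ((n % 2).choose (k % 2)) ∧ Odd ((n / 2).choose (k / 2)) := by
  have lucas := Choose.choose_modEq_choose_mod_mul_choose_div_nat (p := 2) (n := n) (k := k)
  rw [← Nat.odd_mul, Nat.odd_iff, Nat.odd_iff, lucas]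

theorem exists_le_le_add_eq_xor_odd_choose (i j : ℕ) :
    ∃ t ≤ i, ∃ u ≤ j, t + u = i ^^^ j ∧ Odd ((t + u).choose t) := by
  induction i using Nat.strong_induction_on generalizing j with
  | _ i ih =>
  rcases Nat.eq_zero_or_pos i with rfl | hi
  · exact ⟨0, le_rfl, j, le_rfl, by simp⟩
  obtain ⟨t, ht, u, hu, hsum, hodd⟩ := ih (i / 2) (by omega) (j / 2)
  have hdiv : (i ^^^ j) / 2 = i / 2 ^^^ j / 2 := Nat.xor_div_two
  have hmod : (i ^^^ j) % 2 = (i + j) % 2 := Nat.xor_mod_two_eq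
  have odd_append {a b : ℕ} (hab : a + b ≤ 1) :
      Odd ((2 * t + a + (2 * u + b)).choose (2 * t + a)) := by
    rw [odd_choose_iff, show (2 * t + a + (2 * u + b)) / 2 = t + u by omega,
      show (2 * t + a) / 2 = t by omega]
    refine ⟨?_, hodd⟩
    obtain ⟨rfl, rfl⟩ | ⟨rfl, rfl⟩ | ⟨rfl, rfl⟩ :
      (a = 0 ∧ b = 0) ∨ (a = 1 ∧ b = 0) ∨ (a = 0 ∧ b = 1) := by omega
    all_goals simp [Nat.add_mod]
  -- Append the last binary digits of `i` and `j`, dropping both if both are `1`.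
  refine ⟨2 * t + i % 2 * (1 - j % 2), ?_, 2 * u + j % 2 * (1 - i % 2), ?_, ?_, odd_append ?_⟩ <;>
    rcases Nat.mod_two_eq_zero_or_one i with hi2 | hi2 <;>
    rcases Nat.mod_two_eq_zero_or_one j with hj2 | hj2 <;>
    simp only [hi2, hj2] <;> omega

end BinomialParity

section SumsetBound

section CommSemiring

variable {R : Type*} [CommSemiring R]

theorem coeff_aeval_X_add_X (g : Polynomial R) (d : Fin 2 →₀ ℕ) :
    (Polynomial.aeval (.X 0 + .X 1 : MvPolynomial (Fin 2) R) g).coeff d =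
      g.coeff (d 0 + d 1) * (d 0 + d 1).choose (d 0) := by
  simp +contextual [Polynomial.aeval_eq_sum_range, MvPolynomial.coeff_sum,
    MvPolynomial.coeff_add_pow, Polynomial.coeff_eq_zero_of_natDegree_lt]

theorem totalDegree_aeval_X_add_X_le (g : Polynomial R) :
    (Polynomial.aeval (.X 0 + .X 1 : MvPolynomial (Fin 2) R) g).totalDegree ≤ g.natDegree := by
  refine Finset.sup_le fun d hd => ?_
  rw [MvPolynomial.mem_support_iff, coeff_aeval_X_add_X] at hd
  rw [Finsupp.sum_fintype _ _ fun _ => rfl, Fin.sum_univ_two]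
  exact Polynomial.le_natDegree_of_ne_zero (left_ne_zero_of_mul hd)

end CommSemiring

section IsDomain

variable {R : Type*} [CommRing R] [IsDomain R]

theorem exists_eval_add_ne_zero {A B : Finset R} {t u : ℕ} {g : Polynomial R}
    (hA : t < #A) (hB : u < #B) (hdeg : g.natDegree ≤ t + u)
    (hcoeff : g.coeff (t + u) * (t + u).choose t ≠ 0) :
    ∃ a ∈ A, ∃ b ∈ B, g.eval (a + b) ≠ 0 := by
  let f : MvPolynomial (Fin 2) R := Polynomial.aeval (.X 0 + .X 1) g
  let d : Fin 2 →₀ ℕ := Finsupp.single 0 t + Finsupp.single 1 u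
  have hfd : f.coeff d ≠ 0 := by simpa [f, d, coeff_aeval_X_add_X] using hcoeff
  have hdegree : d.degree = t + u := by simp [d]
  have htotal : f.totalDegree = d.degree :=
    ((totalDegree_aeval_X_add_X_le g).trans (hdeg.trans_eq hdegree.symm)).antisymm
      (MvPolynomial.le_totalDegree (MvPolynomial.mem_support_iff.2 hfd))
  obtain ⟨s, hs, hne⟩ := MvPolynomial.combinatorial_nullstellensatz_exists_eval_nonzero f d hfd
    htotal ![A, B] (by simp [Fin.forall_fin_two, d, hA, hB])
  refine ⟨s 0, hs 0, s 1, hs 1, ?_⟩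
  have heval : MvPolynomial.eval s f = g.eval (s 0 + s 1) := by
    simp [f, Polynomial.aeval_eq_sum_range, Polynomial.eval_eq_sum_range]
  rwa [heval] at hne

theorem add_lt_card_add_of_choose_ne_zero [DecidableEq R] {A B : Finset R} {t u : ℕ}
    (hA : t < #A) (hB : u < #B) (hchoose : ((t + u).choose t : R) ≠ 0) : t + u < #(A + B) := by
  by_contra! hle
  let g : Polynomial R := .X ^ (t + u - #(A + B)) * ∏ c ∈ A + B, (.X - .C c)
  have hprod : (∏ c ∈ A + B, (.X - .C c : Polynomial R)).Monic :=
    Polynomial.monic_prod_X_sub_C _ _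
  have hmonic : g.Monic := (Polynomial.monic_X_pow _).mul hprod
  have hdeg : g.natDegree = t + u := by
    rw [(Polynomial.monic_X_pow _).natDegree_mul hprod]
    simp [hle]
  have hlead : g.coeff (t + u) = 1 := hdeg ▸ hmonic.coeff_natDegree
  obtain ⟨a, ha, b, hb, hne⟩ :=
    exists_eval_add_ne_zero (g := g) hA hB hdeg.le (by rwa [hlead, one_mul])
  refine hne ?_
  rw [Polynomial.eval_mul, Polynomial.eval_prod, prod_eq_zero (add_mem_add ha hb) (by simp),
    mul_zero]

theorem xor_lt_card_add_of_charP_two [CharP R 2] [DecidableEq R] {A B : Finset R}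
    {i j : ℕ} (hA : i < #A) (hB : j < #B) : i ^^^ j < #(A + B) := by
  obtain ⟨t, ht, u, hu, hsum, hodd⟩ := exists_le_le_add_eq_xor_odd_choose i j
  rw [← hsum]
  refine add_lt_card_add_of_choose_ne_zero (ht.trans_lt hA) (hu.trans_lt hB) ?_
  rwa [Ne, CharP.cast_eq_zero_iff R 2, ← even_iff_two_dvd, Nat.not_even_iff_odd]

end IsDomain

theorem constr_X_injective {ι K V : Type*} [CommRing K] [AddCommGroup V] [Module K V]
    (b : Module.Basis ι K V) :
    Function.Injective (b.constr K (MvPolynomial.X : ι → MvPolynomial ι K)) :=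
  b.injective_constr_of_linearIndependent (MvPolynomial.linearIndependent_X ι K)

theorem xor_lt_card_add {V : Type*} [AddCommGroup V] [Module (ZMod 2) V] [DecidableEq V]
    {A B : Finset V} {i j : ℕ} (hA : i < #A) (hB : j < #B) : i ^^^ j < #(A + B) := by
  classical
  have hφ := constr_X_injective (Module.Basis.ofVectorSpace (ZMod 2) V)
  rw [← card_image_of_injective _ hφ] at hA hB ⊢
  rw [image_add]
  exact xor_lt_card_add_of_charP_two hA hB

end SumsetBound

section LexNat

variable {n : ℕ}

theorem lexNat_eq_finFunctionFinEquiv (x : Fin n → ZMod 2) :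
    lexNat x = (finFunctionFinEquiv (m := 2) x : Fin (2 ^ n)) :=
  rfl

theorem lexNat_lt_two_pow (x : Fin n → ZMod 2) : lexNat x < 2 ^ n :=
  (lexNat_eq_finFunctionFinEquiv x).trans_lt (Fin.isLt _)

theorem lexNat_injective : Function.Injective (lexNat (n := n)) :=
  Fin.val_injective.comp (finFunctionFinEquiv (m := 2)).injective

theorem exists_lexNat_eq {m : ℕ} (hm : m < 2 ^ n) : ∃ x : Fin n → ZMod 2, lexNat x = m :=
  ⟨(finFunctionFinEquiv (m := 2)).symm ⟨m, hm⟩,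
    congrArg Fin.val (finFunctionFinEquiv.apply_symm_apply _)⟩

theorem testBit_lexNat (x : Fin n → ZMod 2) (k : Fin n) :
    (lexNat x).testBit k = decide (x k = 1) := by
  have hdigit : lexNat x / 2 ^ (k : ℕ) % 2 = (x k).val :=
    congrArg Fin.val (congrFun ((finFunctionFinEquiv (m := 2)).symm_apply_apply x) k)
  rw [Nat.testBit_eq_decide_div_mod_eq, hdigit]
  generalize x k = a
  decide +revert

theorem testBit_lexNat_of_le (x : Fin n → ZMod 2) {k : ℕ} (hk : n ≤ k) :
    (lexNat x).testBit k = false :=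
  Nat.testBit_eq_false_of_lt ((lexNat_lt_two_pow x).trans_le (Nat.pow_le_pow_right two_pos hk))

theorem lexNat_add (x y : Fin n → ZMod 2) : lexNat (x + y) = lexNat x ^^^ lexNat y := by
  refine Nat.eq_of_testBit_eq fun k => ?_
  rw [Nat.testBit_xor]
  obtain hk | hk := lt_or_ge k n
  · lift k to Fin n using hk
    have hxor : ∀ a b : ZMod 2, decide (a + b = 1) = (decide (a = 1) ^^ decide (b = 1)) := by
      decide
    simp only [testBit_lexNat]
    exact hxor (x k) (y k)
  · simp only [testBit_lexNat_of_le _ hk, Bool.xor_false]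

theorem lexNat_lt_of_eq_zero_of_eq_one {x y : Fin n → ZMod 2} {k : Fin n} (hx : x k = 0)
    (hy : y k = 1) (heq : ∀ l, k < l → x l = y l) : lexNat x < lexNat y := by
  refine Nat.lt_of_testBit k (by simp [testBit_lexNat, hx]) (by simp [testBit_lexNat, hy])
    fun l hl => ?_
  obtain hln | hln := lt_or_ge l n
  · lift l to Fin n using hln
    simp only [testBit_lexNat, heq l hl]
  · simp only [testBit_lexNat_of_le _ hln]

theorem lexNat_lt_iff {x y : Fin n → ZMod 2} :
    lexNat x < lexNat y ↔ ∃ k, x k = 0 ∧ y k = 1 ∧ ∀ l, k < l → x l = y l := by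
  refine ⟨fun hlt => ?_, fun ⟨k, hx, hy, heq⟩ => lexNat_lt_of_eq_zero_of_eq_one hx hy heq⟩
  obtain ⟨i, hi⟩ := Function.ne_iff.1 (ne_of_apply_ne lexNat hlt.ne)
  obtain ⟨k, hk, hmax⟩ := exists_max_image {k | x k ≠ y k} id ⟨i, by simpa using hi⟩
  have heq (l : Fin n) (hkl : k < l) : x l = y l := by
    by_contra hne
    exact hkl.not_ge (hmax l (by simpa using hne))
  have hvalues : ∀ a b : ZMod 2, a ≠ b → (a = 0 ∧ b = 1) ∨ (b = 0 ∧ a = 1) := by decide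
  obtain ⟨hx, hy⟩ | ⟨hy, hx⟩ := hvalues (x k) (y k) (by simpa using hk)
  · exact ⟨k, hx, hy, heq⟩
  · exact absurd hlt
      (lexNat_lt_of_eq_zero_of_eq_one hy hx fun l hkl => (heq l hkl).symm).not_gt

end LexNat

section Coset

variable {n : ℕ} {I : Finset (Fin n)} {x y : Fin n → ZMod 2}

theorem mem_cosetOf : y ∈ cosetOf I x ↔ ∀ i ∉ I, y i = x i := by
  simp [cosetOf]

theorem mem_cosetOf_self : x ∈ cosetOf I x :=
  mem_cosetOf.2 fun _ _ => rfl

theorem cosetOf_eq_of_mem (h : y ∈ cosetOf I x) : cosetOf I y = cosetOf I x := by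
  ext z
  rw [mem_cosetOf] at h
  simp only [mem_cosetOf]
  exact forall₂_congr fun i hi => by rw [h i hi]

theorem add_mem_cosetOf_add {x' y' : Fin n → ZMod 2} (hx : x' ∈ cosetOf I x)
    (hy : y' ∈ cosetOf I y) : x' + y' ∈ cosetOf I (x + y) := by
  rw [mem_cosetOf] at hx hy ⊢
  exact fun i hi => congrArg₂ (· + ·) (hx i hi) (hy i hi)

theorem mem_cosetOf_iff_restrict_eq :
    y ∈ cosetOf I x ↔ Iᶜ.restrict y = Iᶜ.restrict x := by
  simp [mem_cosetOf, funext_iff]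

/-- The coordinates of `x` indexed by `I`, renumbered increasingly. Inside a coset of `H_I` they
determine `x`, and the renumbering makes `lexNat` of them the lexicographic rank of `x`. -/
def coordsOn (I : Finset (Fin n)) (x : Fin n → ZMod 2) : Fin #I → ZMod 2 :=
  x ∘ I.orderEmbOfFin rfl

theorem coordsOn_add : coordsOn I (x + y) = coordsOn I x + coordsOn I y :=
  rfl

theorem exists_orderEmbOfFin_eq {α : Type*} [LinearOrder α] {s : Finset α} {a : α} (ha : a ∈ s) :
    ∃ k, s.orderEmbOfFin rfl k = a := by
  rwa [← Set.mem_range, range_orderEmbOfFin]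

theorem eq_of_mem_cosetOf_of_coordsOn_eq (hy : y ∈ cosetOf I x)
    (hcoords : coordsOn I y = coordsOn I x) : y = x := by
  funext i
  by_cases hi : i ∈ I
  · obtain ⟨k, rfl⟩ := exists_orderEmbOfFin_eq hi
    exact congrFun hcoords k
  · exact mem_cosetOf.1 hy i hi

theorem exists_mem_cosetOf_coordsOn_eq (I : Finset (Fin n)) (x : Fin n → ZMod 2)
    (z : Fin #I → ZMod 2) : ∃ y ∈ cosetOf I x, coordsOn I y = z := by
  refine ⟨Function.extend (I.orderEmbOfFin rfl) z x, mem_cosetOf.2 fun i hi => ?_,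
    funext fun k => (I.orderEmbOfFin rfl).injective.extend_apply z x k⟩
  refine Function.extend_apply' _ _ _ ?_
  rintro ⟨k, rfl⟩
  exact hi (orderEmbOfFin_mem I rfl k)

theorem lexNat_lt_iff_coordsOn (hy : y ∈ cosetOf I x) :
    lexNat y < lexNat x ↔ lexNat (coordsOn I y) < lexNat (coordsOn I x) := by
  rw [mem_cosetOf] at hy
  rw [lexNat_lt_iff, lexNat_lt_iff]
  constructor
  · rintro ⟨i, h0, h1, heq⟩
    have hi : i ∈ I := by
      by_contra hi
      exact zero_ne_one (h0.symm.trans ((hy i hi).trans h1))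
    obtain ⟨k, rfl⟩ := exists_orderEmbOfFin_eq hi
    exact ⟨k, h0, h1, fun l hkl => heq _ ((I.orderEmbOfFin rfl).lt_iff_lt.2 hkl)⟩
  · rintro ⟨k, h0, h1, heq⟩
    refine ⟨I.orderEmbOfFin rfl k, h0, h1, fun l hkl => ?_⟩
    by_cases hl : l ∈ I
    · obtain ⟨m, rfl⟩ := exists_orderEmbOfFin_eq hl
      exact heq m ((I.orderEmbOfFin rfl).lt_iff_lt.1 hkl)
    · exact hy l hl

theorem card_filter_lexNat_coordsOn_lt (I : Finset (Fin n)) (x : Fin n → ZMod 2) {m : ℕ}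
    (hm : m ≤ 2 ^ #I) : #{y ∈ cosetOf I x | lexNat (coordsOn I y) < m} = m := by
  conv_rhs => rw [← card_range m]
  refine card_nbij (fun y => lexNat (coordsOn I y)) ?_ ?_ ?_
  · exact fun y hy => mem_range.2 (mem_filter.1 hy).2
  · intro y hy z hz hyz
    have hz' := (mem_filter.1 hz).1
    exact eq_of_mem_cosetOf_of_coordsOn_eq
      (cosetOf_eq_of_mem hz' ▸ (mem_filter.1 hy).1) (lexNat_injective hyz)
  · intro k hk
    have hkm : k < m := mem_range.1 hk
    obtain ⟨z, rfl⟩ := exists_lexNat_eq (hkm.trans_le hm)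
    obtain ⟨y, hy, rfl⟩ := exists_mem_cosetOf_coordsOn_eq I x z
    exact ⟨y, mem_filter.2 ⟨hy, hkm⟩, rfl⟩

theorem card_cosetOf (I : Finset (Fin n)) (x : Fin n → ZMod 2) : #(cosetOf I x) = 2 ^ #I := by
  rw [← card_filter_lexNat_coordsOn_lt I x le_rfl,
    filter_true_of_mem fun y _ => lexNat_lt_two_pow (coordsOn I y)]

theorem card_filter_lexNat_lt (I : Finset (Fin n)) (x : Fin n → ZMod 2) :
    #{y ∈ cosetOf I x | lexNat y < lexNat x} = lexNat (coordsOn I x) := by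
  rw [filter_congr fun y hy => lexNat_lt_iff_coordsOn hy]
  exact card_filter_lexNat_coordsOn_lt I x (lexNat_lt_two_pow _).le

end Coset

section Compression

variable {n : ℕ} (I : Finset (Fin n)) (A B : Finset (Fin n → ZMod 2))

theorem mem_compressI {I : Finset (Fin n)} {A : Finset (Fin n → ZMod 2)} {x : Fin n → ZMod 2} :
    x ∈ compressI I A ↔ lexNat (coordsOn I x) < #(A ∩ cosetOf I x) := by
  simp [compressI, initSeg, mem_cosetOf_self, card_filter_lexNat_lt]

theorem card_compressI_inter_cosetOf (x : Fin n → ZMod 2) :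
    #(compressI I A ∩ cosetOf I x) = #(A ∩ cosetOf I x) := by
  have hle : #(A ∩ cosetOf I x) ≤ 2 ^ #I :=
    (card_le_card inter_subset_right).trans_eq (card_cosetOf I x)
  rw [← card_filter_lexNat_coordsOn_lt I x hle]
  congr 1
  ext y
  rw [mem_inter, mem_filter, and_comm]
  refine and_congr_right fun hy => ?_
  rw [mem_compressI, cosetOf_eq_of_mem hy]

theorem filter_restrict_compl_eq (x : Fin n → ZMod 2) :
    {y ∈ A | Iᶜ.restrict y = Iᶜ.restrict x} = A ∩ cosetOf I x := by
  ext y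
  rw [mem_filter, mem_inter, mem_cosetOf_iff_restrict_eq]

theorem card_compressI : #(compressI I A) = #A := by
  let cosetLabel (x : Fin n → ZMod 2) : (Iᶜ : Finset (Fin n)) → ZMod 2 := Iᶜ.restrict x
  have hmaps (S : Finset (Fin n → ZMod 2)) :
      Set.MapsTo cosetLabel S (univ.image cosetLabel : Finset _) :=
    fun x _ => mem_image_of_mem cosetLabel (mem_univ x)
  rw [card_eq_sum_card_fiberwise (hmaps (compressI I A)), card_eq_sum_card_fiberwise (hmaps A)]
  refine sum_congr rfl fun c hc => ?_
  obtain ⟨x, -, rfl⟩ := mem_image.1 hc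
  rw [filter_restrict_compl_eq, filter_restrict_compl_eq, card_compressI_inter_cosetOf]

theorem inter_cosetOf_add_inter_cosetOf_subset (x y : Fin n → ZMod 2) :
    A ∩ cosetOf I x + B ∩ cosetOf I y ⊆ (A + B) ∩ cosetOf I (x + y) := by
  refine add_subset_iff.2 fun a ha b hb => ?_
  rw [mem_inter] at ha hb ⊢
  exact ⟨add_mem_add ha.1 hb.1, add_mem_cosetOf_add ha.2 hb.2⟩

theorem compressI_add_compressI_subset :
    compressI I A + compressI I B ⊆ compressI I (A + B) := by
  refine add_subset_iff.2 fun x hx y hy => ?_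
  rw [mem_compressI] at hx hy ⊢
  calc lexNat (coordsOn I (x + y))
      = lexNat (coordsOn I x) ^^^ lexNat (coordsOn I y) := by rw [coordsOn_add, lexNat_add]
    _ < #(A ∩ cosetOf I x + B ∩ cosetOf I y) := xor_lt_card_add hx hy
    _ ≤ #((A + B) ∩ cosetOf I (x + y)) :=
      card_le_card (inter_cosetOf_add_inter_cosetOf_subset I A B x y)

end Compression

theorem stmt6 {n : ℕ} (I : Finset (Fin n)) (A B : Finset (Fin n → ZMod 2)) :
    compressI I A + compressI I B ⊆ compressI I (A + B) ∧
    (compressI I A + compressI I B).card ≤ (A + B).card := by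
  have hsub := compressI_add_compressI_subset I A B
  exact ⟨hsub, (card_le_card hsub).trans_eq (card_compressI I (A + B))⟩
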